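/- arXiv:1904.11736 — 3 statements merged into one kernel-verified Lean document; each statement's English description precedes it below -/
import Mathlib

section
/- Let S, S' be continuous semilattices with bottom elements and let i : S → S'^∧ be an order isomorphism. Then the map P : S × S' → {0,1} defined by P(x,y) = 1 iff y ∈ i(x) is a separating compatibility, and it is the unique separating compatibility P with i(x) = {y ∈ S' : P(x,y) = 1} for all x ∈ S. -/
/-- A dcpo: every nonempty directed subset has a least upper bound. -/
def IsDcpo (α : Type*) [PartialOrder α] : Prop :=
  ∀ D : Set α, D.Nonempty → DirectedOn (· ≤ ·) D → ∃ a : α, IsLUB D a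

/-- Scott closed: a lower set closed under suprema of its (nonempty) directed subsets. -/
def ScottClosed {α : Type*} [PartialOrder α] (A : Set α) : Prop :=
  IsLowerSet A ∧
    ∀ D : Set α, D ⊆ A → D.Nonempty → DirectedOn (· ≤ ·) D → ∀ a : α, IsLUB D a → a ∈ A

/-- Scott closure: the least Scott closed set containing `A`. -/
def scottClosure {α : Type*} [PartialOrder α] (A : Set α) : Set α :=
  ⋂₀ {C : Set α | ScottClosed C ∧ A ⊆ C}

/-- `x` is way below `y`. -/
def WayBelow {α : Type*} [PartialOrder α] (x y : α) : Prop :=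
  ∀ D : Set α, D.Nonempty → DirectedOn (· ≤ ·) D → ∀ a : α, IsLUB D a → y ≤ a → ∃ d ∈ D, x ≤ d

/-- A continuous (meet-)semilattice with zero: a dcpo meet-semilattice with bottom in which
every element is the directed supremum of the elements way below it. -/
def IsContinuousSemilattice (α : Type*) [SemilatticeInf α] [OrderBot α] : Prop :=
  IsDcpo α ∧
    ∀ y : α, DirectedOn (· ≤ ·) {x : α | WayBelow x y} ∧ IsLUB {x : α | WayBelow x y} y

/-- A compatibility `P : S × S' → {0,1}` (encoded with `Prop` as the two-element lattice,
`P x y` meaning `P(x,y) = 1`): it preserves binary meets in each variable separately,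
sends pairs containing a bottom element to `0`, and is Scott continuous (preserves
suprema of nonempty directed subsets of the product). -/
def IsCompatibility {S S' : Type*} [SemilatticeInf S] [OrderBot S]
    [SemilatticeInf S'] [OrderBot S'] (P : S → S' → Prop) : Prop :=
  (∀ x₁ x₂ y, P (x₁ ⊓ x₂) y ↔ P x₁ y ∧ P x₂ y) ∧
  (∀ x y₁ y₂, P x (y₁ ⊓ y₂) ↔ P x y₁ ∧ P x y₂) ∧
  (∀ y, ¬ P ⊥ y) ∧ (∀ x, ¬ P x ⊥) ∧
  (∀ D : Set (S × S'), D.Nonempty → DirectedOn (· ≤ ·) D → ∀ a : S × S', IsLUB D a →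
    (P a.1 a.2 ↔ ∃ p ∈ D, P p.1 p.2))

/-- A separating compatibility. -/
def IsSeparatingCompatibility {S S' : Type*} [SemilatticeInf S] [OrderBot S]
    [SemilatticeInf S'] [OrderBot S'] (P : S → S' → Prop) : Prop :=
  IsCompatibility P ∧
  (∀ x₁ x₂ : S, (∀ y, P x₁ y ↔ P x₂ y) → x₁ = x₂) ∧
  (∀ y₁ y₂ : S', (∀ x, P x y₁ ↔ P x y₂) → y₁ = y₂)

/-- Transversal of `A ⊆ S` w.r.t. a compatibility `P : S × S' → {0,1}`:
all `y ∈ S'` with `P(x,y) = 0` for every `x ∈ A`. -/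
def transversal {S S' : Type*} (P : S → S' → Prop) (A : Set S) : Set S' :=
  {y : S' | ∀ x ∈ A, ¬ P x y}

/-- A (crisp) ambiguous representation of `S₁` in `S₂`. -/
def AmbRep {S₁ S₂ : Type*} [PartialOrder S₁] [PartialOrder S₂] (R : Set (S₁ × S₂)) : Prop :=
  (∀ x : S₁, ({y : S₂ | (x, y) ∈ R}).Nonempty ∧ ScottClosed {y : S₂ | (x, y) ∈ R}) ∧
  (∀ y : S₂, IsUpperSet {x : S₁ | (x, y) ∈ R})

/-- The pseudo-inverse of a relation `R ⊆ S₁ × S₂` w.r.t. compatibilities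
`P₁ : S₁ × T₁ → {0,1}` and `P₂ : S₂ × T₂ → {0,1}`. -/
def psInv {S₁ S₂ T₁ T₂ : Type*} (P₁ : S₁ → T₁ → Prop) (P₂ : S₂ → T₂ → Prop)
    (R : Set (S₁ × S₂)) : Set (T₂ × T₁) :=
  {p : T₂ × T₁ | ∀ x : S₁, P₁ x p.2 → ∃ y : S₂, (x, y) ∈ R ∧ P₂ y p.1}

/-- Composition `R ; Q` of ambiguous representations. -/
def ambComp {S₁ S₂ S₃ : Type*} [PartialOrder S₃]
    (R : Set (S₁ × S₂)) (Q : Set (S₂ × S₃)) : Set (S₁ × S₃) :=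
  {p : S₁ × S₃ | ∀ z' : S₃, WayBelow z' p.2 → ∃ y : S₂, (p.1, y) ∈ R ∧ (y, z') ∈ Q}

/-- Pseudo-invertibility condition (c). -/
def PseudoInvertible {S₁ S₂ : Type*} [PartialOrder S₁] [PartialOrder S₂]
    (R : Set (S₁ × S₂)) : Prop :=
  ∀ x y, (x, y) ∈ R → ∀ y', WayBelow y' y → ∃ x', WayBelow x' x ∧ (x', y') ∈ R

/-- An `L`-fuzzy ambiguous representation of `S₁` in `S₂`. -/
def LAmbRep {S₁ S₂ L : Type*} [PartialOrder S₁] [PartialOrder S₂] [PartialOrder L]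
    (R : Set (S₁ × S₂ × L)) : Prop :=
  (∀ (y : S₂) (α : L), IsUpperSet {x : S₁ | (x, y, α) ∈ R}) ∧
  (∀ (x : S₁) (α : L),
    ({y : S₂ | (x, y, α) ∈ R}).Nonempty ∧ ScottClosed {y : S₂ | (x, y, α) ∈ R}) ∧
  (∀ (x : S₁) (y : S₂), ({α : L | (x, y, α) ∈ R}).Nonempty ∧
    DirectedOn (· ≤ ·) {α : L | (x, y, α) ∈ R} ∧ ScottClosed {α : L | (x, y, α) ∈ R})

/-- The `α`-cut of an `L`-fuzzy relation. -/
def lCut {S₁ S₂ L : Type*} (R : Set (S₁ × S₂ × L)) (α : L) : Set (S₁ × S₂) :=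
  {p : S₁ × S₂ | (p.1, p.2, α) ∈ R}

/-- The pseudo-inverse of an `L`-fuzzy ambiguous representation, given through its
`α`-cuts: `(R⊤)_α = ⋂_{β ≪ α} (R_β)⊤`. -/
def lpsInv {S₁ S₂ T₁ T₂ L : Type*} [PartialOrder L]
    (P₁ : S₁ → T₁ → Prop) (P₂ : S₂ → T₂ → Prop) (R : Set (S₁ × S₂ × L)) :
    Set (T₂ × T₁ × L) :=
  {p : T₂ × T₁ × L | ∀ β : L, WayBelow β p.2.2 → (p.1, p.2.1) ∈ psInv P₁ P₂ (lCut R β)}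

/-- Pseudo-invertibility condition (d) for `L`-fuzzy ambiguous representations. -/
def LPseudoInvertible {S₁ S₂ L : Type*} [PartialOrder S₁] [PartialOrder S₂] [PartialOrder L]
    (R : Set (S₁ × S₂ × L)) : Prop :=
  ∀ x y α, (x, y, α) ∈ R → ∀ y', WayBelow y' y → ∀ α', WayBelow α' α →
    ∃ x', WayBelow x' x ∧ (x', y', α') ∈ R

/-- A unital quantale structure on a complete lattice: an associative multiplication
distributing over arbitrary suprema in each variable, with the top element as two-sided
unit. -/
def IsQuantaleMul {L : Type*} [CompleteLattice L] (mul : L → L → L) : Prop :=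
  (∀ a b c, mul (mul a b) c = mul a (mul b c)) ∧
  (∀ (s : Set L) (b : L), mul (sSup s) b = ⨆ a ∈ s, mul a b) ∧
  (∀ (a : L) (s : Set L), mul a (sSup s) = ⨆ b ∈ s, mul a b) ∧
  (∀ a, mul ⊤ a = a) ∧ (∀ a, mul a ⊤ = a)

/-- Composition `R ⊛ Q` of `L`-fuzzy ambiguous representations w.r.t. a quantale
multiplication `mul` on `L`. -/
def lComp {S₁ S₂ S₃ L : Type*} [PartialOrder S₃] [CompleteLattice L] (mul : L → L → L)
    (R : Set (S₁ × S₂ × L)) (Q : Set (S₂ × S₃ × L)) : Set (S₁ × S₃ × L) :=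
  {p : S₁ × S₃ × L | ∀ z' : S₃, WayBelow z' p.2.1 → ∀ α' : L, WayBelow α' p.2.2 →
    ∃ (n : ℕ) (y : Fin n → S₂) (β γ : Fin n → L),
      (∀ i, (p.1, y i, β i) ∈ R ∧ (y i, z', γ i) ∈ Q) ∧ α' ≤ ⨆ i, mul (β i) (γ i)}

/-! In `S'^∧` the bottom element is `∅`, binary meets are intersections and directed suprema are
unions. Hence membership is a compatibility between `S'^∧` and `S'`, and it can be transported along
the isomorphism `i`. Separation of filters is extensionality. To separate points of `S'`, suppose
`¬ x ≤ y` and choose `u ≪ x` with `¬ u ≤ y`. Repeated interpolation between `u` and `x` gives a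
sequence `x = c₀ ≫ c₁ ≫ c₂ ≫ ⋯` above `u`, and the upper set generated by this sequence is a
Scott-open filter containing `x` but not `y`. -/

section WayBelow

variable {α : Type*} [PartialOrder α] {x y z : α}

theorem WayBelow.le (h : WayBelow x y) : x ≤ y := by
  obtain ⟨_, rfl, hxy⟩ := h {y} (Set.singleton_nonempty y) (directedOn_singleton y) y
    isLUB_singleton le_rfl
  exact hxy

theorem WayBelow.trans_le (h : WayBelow x y) (hyz : y ≤ z) : WayBelow x z :=
  fun D hne hD a ha hza => h D hne hD a ha (hyz.trans hza)

theorem wayBelow_of_le_of_wayBelow (hxy : x ≤ y) (h : WayBelow y z) : WayBelow x z :=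
  fun D hne hD a ha hza => (h D hne hD a ha hza).imp fun _ hd => ⟨hd.1, hxy.trans hd.2⟩

theorem bot_wayBelow [OrderBot α] (y : α) : WayBelow ⊥ y :=
  fun _ hne _ _ _ _ => hne.imp fun _ hd => ⟨hd, bot_le⟩

/-- A continuous poset: every element is the supremum of the nonempty directed set of elements way
below it. Unlike in `IsContinuousSemilattice`, directed suprema need not exist. -/
def IsContinuousPoset (α : Type*) [PartialOrder α] : Prop :=
  ∀ y : α, {x : α | WayBelow x y}.Nonempty ∧ DirectedOn (· ≤ ·) {x : α | WayBelow x y} ∧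
    IsLUB {x : α | WayBelow x y} y

theorem IsContinuousSemilattice.isContinuousPoset {α : Type*} [SemilatticeInf α] [OrderBot α]
    (hα : IsContinuousSemilattice α) : IsContinuousPoset α :=
  fun y => ⟨⟨⊥, bot_wayBelow y⟩, hα.2 y⟩

namespace IsContinuousPoset

theorem exists_wayBelow_not_le (hα : IsContinuousPoset α) (h : ¬ x ≤ y) :
    ∃ u, WayBelow u x ∧ ¬ u ≤ y := by
  by_contra! hle
  exact h ((hα x).2.2.2 hle)

theorem directedOn_wayBelow_wayBelow (hα : IsContinuousPoset α) (y : α) :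
    DirectedOn (· ≤ ·) {w : α | ∃ v, WayBelow w v ∧ WayBelow v y} := by
  rintro w₁ ⟨v₁, hw₁, hv₁⟩ w₂ ⟨v₂, hw₂, hv₂⟩
  obtain ⟨v, hv, hv₁v, hv₂v⟩ := (hα y).2.1 v₁ hv₁ v₂ hv₂
  obtain ⟨w, hw, hw₁w, hw₂w⟩ := (hα v).2.1 w₁ (hw₁.trans_le hv₁v) w₂ (hw₂.trans_le hv₂v)
  exact ⟨w, ⟨v, hw, hv⟩, hw₁w, hw₂w⟩

theorem isLUB_wayBelow_wayBelow (hα : IsContinuousPoset α) (y : α) :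
    IsLUB {w : α | ∃ v, WayBelow w v ∧ WayBelow v y} y :=
  ⟨fun _ ⟨_, hw, hv⟩ => hw.le.trans hv.le, fun _ hb =>
    (hα y).2.2.2 fun v hv => (hα v).2.2.2 fun _ hw => hb ⟨v, hw, hv⟩⟩

theorem exists_wayBelow_between (hα : IsContinuousPoset α) (h : WayBelow x y) :
    ∃ v, WayBelow x v ∧ WayBelow v y := by
  have hne : {w : α | ∃ v, WayBelow w v ∧ WayBelow v y}.Nonempty := by
    obtain ⟨v, hv⟩ := (hα y).1
    obtain ⟨w, hw⟩ := (hα v).1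
    exact ⟨w, v, hw, hv⟩
  obtain ⟨w, ⟨v, hwv, hvy⟩, hxw⟩ := h _ hne (hα.directedOn_wayBelow_wayBelow y) y
    (hα.isLUB_wayBelow_wayBelow y) le_rfl
  exact ⟨v, wayBelow_of_le_of_wayBelow hxw hwv, hvy⟩

theorem exists_seq_wayBelow (hα : IsContinuousPoset α) (h : WayBelow x y) :
    ∃ c : ℕ → α, c 0 = y ∧ (∀ n, WayBelow (c (n + 1)) (c n)) ∧ ∀ n, WayBelow x (c n) := by
  have hstep (v : {v : α // WayBelow x v}) : ∃ w : {w : α // WayBelow x w}, WayBelow w.1 v.1 :=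
    let ⟨w, hxw, hwv⟩ := hα.exists_wayBelow_between v.2
    ⟨⟨w, hxw⟩, hwv⟩
  choose f hf using hstep
  refine ⟨fun n => f^[n] ⟨y, h⟩, rfl, fun n => ?_, fun n => (f^[n] ⟨y, h⟩).2⟩
  simp only [Function.iterate_succ_apply']
  exact hf _

end IsContinuousPoset

end WayBelow

theorem scottClosed_compl_iff {α : Type*} [PartialOrder α] {F : Set α} :
    ScottClosed Fᶜ ↔ IsUpperSet F ∧ DirSupInacc F :=
  and_congr isLowerSet_compl dirSupClosed_compl

/-- An element of `α^∧`: a Scott-open filter of `α` other than `α` itself, possibly empty. Since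
filters are upper sets, properness is encoded as `⊥` not being an element. -/
structure ProperScottOpenFilter (α : Type*) [SemilatticeInf α] [OrderBot α] where
  carrier : Set α
  isUpperSet' : IsUpperSet carrier
  inf_mem' : ∀ a ∈ carrier, ∀ b ∈ carrier, a ⊓ b ∈ carrier
  dirSupInacc' : DirSupInacc carrier
  bot_notMem' : ⊥ ∉ carrier

namespace ProperScottOpenFilter

variable {α : Type*} [SemilatticeInf α] [OrderBot α]

instance : SetLike (ProperScottOpenFilter α) α where
  coe := carrier
  coe_injective F G h := by cases F; cases G; congr

instance : PartialOrder (ProperScottOpenFilter α) := .ofSetLike (ProperScottOpenFilter α) α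

section Basic

variable (F : ProperScottOpenFilter α) {x y : α}

theorem isUpperSet : IsUpperSet (F : Set α) := F.isUpperSet'

theorem dirSupInacc : DirSupInacc (F : Set α) := F.dirSupInacc'

theorem bot_notMem : ⊥ ∉ F := F.bot_notMem'

theorem inf_mem_iff : x ⊓ y ∈ F ↔ x ∈ F ∧ y ∈ F :=
  ⟨fun h => ⟨F.isUpperSet inf_le_left h, F.isUpperSet inf_le_right h⟩,
    fun h => F.inf_mem' x h.1 y h.2⟩

theorem scottClosed_compl : ScottClosed (F : Set α)ᶜ :=
  scottClosed_compl_iff.2 ⟨F.isUpperSet, F.dirSupInacc⟩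

theorem coe_ne_univ : (F : Set α) ≠ Set.univ :=
  (Set.ne_univ_iff_exists_notMem _).2 ⟨⊥, F.bot_notMem⟩

end Basic

/-- The element of `α^∧` with underlying set `F`, where Scott openness is given through the
complement and properness as `F ≠ Set.univ`. -/
def ofScottClosedCompl (F : Set α) (hF : ScottClosed Fᶜ) (hinf : ∀ a ∈ F, ∀ b ∈ F, a ⊓ b ∈ F)
    (hne : F ≠ Set.univ) : ProperScottOpenFilter α where
  carrier := F
  isUpperSet' := (scottClosed_compl_iff.1 hF).1
  inf_mem' := hinf
  dirSupInacc' := (scottClosed_compl_iff.1 hF).2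
  bot_notMem' h :=
    hne (Set.eq_univ_of_forall fun _ => (scottClosed_compl_iff.1 hF).1 bot_le h)

instance : OrderBot (ProperScottOpenFilter α) where
  bot :=
    { carrier := ∅
      isUpperSet' := isUpperSet_empty
      inf_mem' := fun _ h => h.elim
      dirSupInacc' := .empty
      bot_notMem' := Set.notMem_empty ⊥ }
  bot_le F := Set.empty_subset (F : Set α)

theorem notMem_bot (y : α) : y ∉ (⊥ : ProperScottOpenFilter α) := Set.notMem_empty y

instance : SemilatticeInf (ProperScottOpenFilter α) where
  inf F G :=
    { carrier := F ∩ G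
      isUpperSet' := F.isUpperSet.inter G.isUpperSet
      inf_mem' := fun _ ha _ hb =>
        ⟨F.inf_mem_iff.2 ⟨ha.1, hb.1⟩, G.inf_mem_iff.2 ⟨ha.2, hb.2⟩⟩
      dirSupInacc' := F.dirSupInacc.inter G.dirSupInacc
      bot_notMem' := fun h => F.bot_notMem h.1 }
  inf_le_left F G := Set.inter_subset_left (s := (F : Set α)) (t := G)
  inf_le_right F G := Set.inter_subset_right (s := (F : Set α)) (t := G)
  le_inf _ _ _ hF hG := Set.subset_inter hF hG

theorem mem_inf {F G : ProperScottOpenFilter α} {y : α} : y ∈ F ⊓ G ↔ y ∈ F ∧ y ∈ G := Iff.rfl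

/-- The union of a directed family of proper Scott-open filters, which is its supremum in `α^∧`. -/
def directedUnion (D : Set (ProperScottOpenFilter α)) (hD : DirectedOn (· ≤ ·) D) :
    ProperScottOpenFilter α where
  carrier := ⋃ F ∈ D, F
  isUpperSet' := isUpperSet_iUnion₂ fun F _ => F.isUpperSet
  inf_mem' a ha b hb := by
    obtain ⟨F, hF, haF⟩ := Set.mem_iUnion₂.1 ha
    obtain ⟨G, hG, hbG⟩ := Set.mem_iUnion₂.1 hb
    obtain ⟨H, hH, hFH, hGH⟩ := hD F hF G hG
    exact Set.mem_iUnion₂.2 ⟨H, hH, H.inf_mem_iff.2 ⟨hFH haF, hGH hbG⟩⟩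
  dirSupInacc' := .iUnion fun F => .iUnion fun _ => F.dirSupInacc
  bot_notMem' h :=
    let ⟨F, _, hF⟩ := Set.mem_iUnion₂.1 h
    F.bot_notMem hF

theorem mem_directedUnion {D : Set (ProperScottOpenFilter α)} {hD : DirectedOn (· ≤ ·) D} {y : α} :
    y ∈ directedUnion D hD ↔ ∃ F ∈ D, y ∈ F :=
  Set.mem_iUnion₂.trans <| by simp only [exists_prop, SetLike.mem_coe]

theorem mem_iff_of_isLUB {D : Set (ProperScottOpenFilter α)} (hD : DirectedOn (· ≤ ·) D)
    {G : ProperScottOpenFilter α} (hG : IsLUB D G) {y : α} : y ∈ G ↔ ∃ F ∈ D, y ∈ F := by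
  refine ⟨fun hy => ?_, fun ⟨F, hF, hy⟩ => hG.1 hF hy⟩
  have hle : G ≤ directedUnion D hD :=
    hG.2 fun F hF _ hy => mem_directedUnion.2 ⟨F, hF, hy⟩
  exact mem_directedUnion.1 (hle hy)

theorem mem_iff_of_isLUB_prod {D : Set (ProperScottOpenFilter α × α)} (hne : D.Nonempty)
    (hD : DirectedOn (· ≤ ·) D) {a : ProperScottOpenFilter α × α} (ha : IsLUB D a) :
    a.2 ∈ a.1 ↔ ∃ p ∈ D, p.2 ∈ p.1 := by
  obtain ⟨ha₁, ha₂⟩ := isLUB_prod.1 ha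
  refine ⟨fun h => ?_, fun ⟨p, hp, h⟩ => (ha.1 hp).1 (p.1.isUpperSet (ha.1 hp).2 h)⟩
  obtain ⟨_, ⟨p, hp, rfl⟩, hap⟩ := (mem_iff_of_isLUB hD.fst ha₁).1 h
  obtain ⟨_, ⟨q, hq, rfl⟩, hqp⟩ := p.1.dirSupInacc (hne.image _) hD.snd ha₂ hap
  obtain ⟨r, hr, hpr, hqr⟩ := hD p hp q hq
  exact ⟨r, hr, hpr.1 (p.1.isUpperSet hqr.2 hqp)⟩

theorem isCompatibility_mem :
    IsCompatibility fun (F : ProperScottOpenFilter α) (y : α) => y ∈ F :=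
  ⟨fun _ _ _ => mem_inf, fun F _ _ => F.inf_mem_iff, notMem_bot, bot_notMem,
    fun _ hne hD _ ha => mem_iff_of_isLUB_prod hne hD ha⟩

/-- The upper set generated by a sequence each of whose terms is way below the preceding one. -/
def ofWayBelowSeq (c : ℕ → α) (hc : ∀ n, WayBelow (c (n + 1)) (c n)) (hbot : ∀ n, c n ≠ ⊥) :
    ProperScottOpenFilter α where
  carrier := {z | ∃ n, c n ≤ z}
  isUpperSet' _ _ hab := fun ⟨n, hn⟩ => ⟨n, hn.trans hab⟩
  inf_mem' := fun _ ⟨m, hm⟩ _ ⟨n, hn⟩ =>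
    have hanti : Antitone c := antitone_nat_of_succ_le fun n => (hc n).le
    ⟨max m n, le_inf ((hanti (le_max_left m n)).trans hm) ((hanti (le_max_right m n)).trans hn)⟩
  dirSupInacc' D hne hD a ha := fun ⟨n, hn⟩ =>
    let ⟨d, hd, hnd⟩ := hc n D hne hD a ha hn
    ⟨d, hd, n + 1, hnd⟩
  bot_notMem' := fun ⟨n, hn⟩ => hbot n (le_bot_iff.1 hn)

theorem exists_mem_notMem (hα : IsContinuousPoset α) {x y : α} (h : ¬ x ≤ y) :
    ∃ F : ProperScottOpenFilter α, x ∈ F ∧ y ∉ F := by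
  obtain ⟨u, hux, huy⟩ := hα.exists_wayBelow_not_le h
  obtain ⟨c, hc₀, hc, huc⟩ := hα.exists_seq_wayBelow hux
  have hcy (n : ℕ) : ¬ c n ≤ y := fun hn => huy ((huc n).le.trans hn)
  exact ⟨ofWayBelowSeq c hc fun n hn => hcy n (hn ▸ bot_le), ⟨0, hc₀.le⟩, fun ⟨n, hn⟩ => hcy n hn⟩

theorem le_of_forall_mem (hα : IsContinuousPoset α) {x y : α}
    (h : ∀ F : ProperScottOpenFilter α, x ∈ F → y ∈ F) : x ≤ y := by
  by_contra hxy
  obtain ⟨F, hx, hy⟩ := exists_mem_notMem hα hxy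
  exact hy (h F hx)

theorem isSeparatingCompatibility_mem (hα : IsContinuousPoset α) :
    IsSeparatingCompatibility fun (F : ProperScottOpenFilter α) (y : α) => y ∈ F :=
  ⟨isCompatibility_mem, fun _ _ => SetLike.ext, fun _ _ h =>
    le_antisymm (le_of_forall_mem hα fun F => (h F).1) (le_of_forall_mem hα fun F => (h F).2)⟩

end ProperScottOpenFilter

section Transport

variable {S T S' : Type*} [SemilatticeInf S] [OrderBot S] [SemilatticeInf T] [OrderBot T]
  [SemilatticeInf S'] [OrderBot S'] {P : T → S' → Prop}

theorem IsCompatibility.comp_orderIso (hP : IsCompatibility P) (e : S ≃o T) :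
    IsCompatibility fun x y => P (e x) y := by
  obtain ⟨hinf_left, hinf_right, hbot_left, hbot_right, hsup⟩ := hP
  refine ⟨fun x₁ x₂ y => ?_, fun x => hinf_right (e x), fun y => ?_, fun x => hbot_right (e x),
    fun D hne hD a ha => ?_⟩
  · simp only [map_inf, hinf_left]
  · simpa only [map_bot] using hbot_left y
  · have hD' : DirectedOn (· ≤ ·) ((fun p => (e p.1, p.2)) '' D) :=
      hD.mono_comp fun _ _ h => ⟨e.monotone h.1, h.2⟩
    have ha' : IsLUB ((fun p => (e p.1, p.2)) '' D) (e a.1, a.2) := by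
      obtain ⟨ha₁, ha₂⟩ := isLUB_prod.1 ha
      rw [isLUB_prod, Set.image_image, Set.image_image]
      exact ⟨by simpa only [Set.image_image] using e.isLUB_image'.2 ha₁, ha₂⟩
    simpa only [Set.exists_mem_image] using hsup _ (hne.image _) hD' _ ha'

theorem IsSeparatingCompatibility.comp_orderIso (hP : IsSeparatingCompatibility P) (e : S ≃o T) :
    IsSeparatingCompatibility fun x y => P (e x) y :=
  ⟨hP.1.comp_orderIso e, fun x₁ x₂ h => e.injective (hP.2.1 (e x₁) (e x₂) h),
    fun y₁ y₂ h => hP.2.2 y₁ y₂ (e.surjective.forall.2 h)⟩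

end Transport

theorem stmt2_general {S S' : Type*} [SemilatticeInf S] [OrderBot S] [SemilatticeInf S']
    [OrderBot S'] (hS' : IsContinuousPoset S') (i : S → Set S')
    (hi_mem : ∀ x : S, ScottClosed (i x)ᶜ ∧ (∀ a ∈ i x, ∀ b ∈ i x, a ⊓ b ∈ i x) ∧
      i x ≠ Set.univ)
    (hi_ord : ∀ x₁ x₂ : S, x₁ ≤ x₂ ↔ i x₁ ⊆ i x₂)
    (hi_surj : ∀ F : Set S', ScottClosed Fᶜ → (∀ a ∈ F, ∀ b ∈ F, a ⊓ b ∈ F) →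
      F ≠ Set.univ → ∃ x : S, i x = F) :
    IsSeparatingCompatibility (fun (x : S) (y : S') => y ∈ i x) ∧
    (∀ P : S → S' → Prop,
      (∀ x : S, {y : S' | P x y} = i x) → P = fun (x : S) (y : S') => y ∈ i x) := by
  let j (x : S) : ProperScottOpenFilter S' :=
    .ofScottClosedCompl (i x) (hi_mem x).1 (hi_mem x).2.1 (hi_mem x).2.2
  have hj : Function.Surjective j := fun F =>
    let ⟨x, hx⟩ := hi_surj F F.scottClosed_compl
      (fun _ ha _ hb => F.inf_mem_iff.2 ⟨ha, hb⟩) F.coe_ne_univ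
    ⟨x, SetLike.ext' hx⟩
  let e : S ≃o ProperScottOpenFilter S' :=
    RelIso.ofSurjective (OrderEmbedding.ofMapLEIff j fun x₁ x₂ => (hi_ord x₁ x₂).symm) hj
  exact ⟨(ProperScottOpenFilter.isSeparatingCompatibility_mem hS').comp_orderIso e,
    fun P hP => funext₂ fun x y => propext (Set.ext_iff.1 (hP x) y)⟩

/-- If `i : S → S'^∧` is an order isomorphism onto the poset of Scott-open
filters of `S'` other than `S'` itself (ordered by inclusion), then `P(x,y) = 1 ↔ y ∈ i(x)`
defines a separating compatibility, and it is the unique separating compatibility `P` with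
`i(x) = {y | P(x,y) = 1}` for all `x`. -/
theorem stmt2 {S S' : Type*} [SemilatticeInf S] [OrderBot S] [SemilatticeInf S'] [OrderBot S']
    (hS : IsContinuousSemilattice S) (hS' : IsContinuousSemilattice S')
    (i : S → Set S')
    (hi_mem : ∀ x : S, ScottClosed (i x)ᶜ ∧ IsUpperSet (i x) ∧
      (∀ a ∈ i x, ∀ b ∈ i x, a ⊓ b ∈ i x) ∧ i x ≠ Set.univ)
    (hi_ord : ∀ x₁ x₂ : S, x₁ ≤ x₂ ↔ i x₁ ⊆ i x₂)
    (hi_surj : ∀ F : Set S', ScottClosed Fᶜ → IsUpperSet F →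
      (∀ a ∈ F, ∀ b ∈ F, a ⊓ b ∈ F) → F ≠ Set.univ → ∃ x : S, i x = F) :
    IsSeparatingCompatibility (fun (x : S) (y : S') => y ∈ i x) ∧
    (∀ P : S → S' → Prop, IsSeparatingCompatibility P →
      (∀ x : S, {y : S' | P x y} = i x) → P = fun (x : S) (y : S') => y ∈ i x) := by
  obtain ⟨hsep, huniq⟩ := stmt2_general hS'.isContinuousPoset i
    (fun x => ⟨(hi_mem x).1, (hi_mem x).2.2⟩) hi_ord
    fun F hF => hi_surj F hF (isLowerSet_compl.1 hF.1)
  exact ⟨hsep, fun P _ => huniq P⟩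
end

section
/- Let R ⊆ S₁ × S₂ be an ambiguous representation of S₁ in S₂, and fix separating compatibilities P₁ : S₁ × Ŝ₁ → {0,1} and P₂ : S₂ × Ŝ₂ → {0,1}. Then the pseudo-inverse R⊤ ⊆ Ŝ₂ × Ŝ₁ is an ambiguous representation of Ŝ₂ in Ŝ₁. -/
/-! The cut `sR⊤` consists of the `t` such that no `x` outside `{x | ∃ y, (x, y) ∈ R ∧ P₂ y s}`
satisfies `P₁ x t`: it is the transversal of the complement of that set. A transversal is an
intersection of zero sets `{t | ¬ P₁ x t}`, each Scott closed and containing `⊥` because `P₁ x` is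
Scott continuous and vanishes at `⊥`. Enlarging `s` only enlarges `{x | ∃ y, (x, y) ∈ R ∧ P₂ y s}`,
so the other cuts are upper sets. -/

theorem ScottClosed.iInter {ι : Sort*} {α : Type*} [PartialOrder α] {A : ι → Set α}
    (hA : ∀ i, ScottClosed (A i)) : ScottClosed (⋂ i, A i) :=
  ⟨isLowerSet_iInter fun i => (hA i).1, DirSupClosed.iInter fun i => (hA i).2⟩

theorem scottClosed_setOfPred_not {α : Type*} [PartialOrder α] {f : α → Prop}
    (hf : ScottContinuous f) : ScottClosed {a | ¬ f a} :=
  ⟨fun _ _ hle => mt (hf.monotone hle),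
    -- If `f` is false on `D`, then `False` bounds the image of `D`, so `f (sup D) ≤ False`.
    fun _ hD hne hdir _ ha => (hf hne hdir ha).2 (Set.forall_mem_image.2 fun _ hd => hD hd)⟩

section Compatibility

variable {S S' : Type*} [SemilatticeInf S] [OrderBot S] [SemilatticeInf S'] [OrderBot S']
  {P : S → S' → Prop}

theorem IsCompatibility.scottContinuous_uncurry (hP : IsCompatibility P) :
    ScottContinuous fun p : S × S' => P p.1 p.2 := by
  obtain ⟨-, -, -, -, hsup⟩ := hP
  intro D hne hD a ha
  have hPa : P a.1 a.2 ↔ ∃ p ∈ D, P p.1 p.2 := hsup D hne hD a ha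
  refine ⟨Set.forall_mem_image.2 fun p hp hPp => hPa.2 ⟨p, hp, hPp⟩, fun b hb h => ?_⟩
  obtain ⟨p, hp, hPp⟩ := hPa.1 h
  exact hb (Set.mem_image_of_mem _ hp) hPp

theorem IsCompatibility.scottContinuous_right (hP : IsCompatibility P) (x : S) :
    ScottContinuous (P x) :=
  ((ScottContinuous.const x).prodMk .id).comp hP.scottContinuous_uncurry

theorem IsCompatibility.not_apply_bot (hP : IsCompatibility P) (x : S) : ¬ P x ⊥ :=
  hP.2.2.2.1 x

end Compatibility

section Transversal

variable {S T : Type*} {P : S → T → Prop} {A : Set S}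

theorem transversal_eq_iInter : transversal P A = ⋂ x ∈ A, {t | ¬ P x t} := by
  ext t
  simp only [transversal, Set.mem_iInter, Set.mem_ofPred_eq]

theorem scottClosed_transversal [PartialOrder T] (hP : ∀ x ∈ A, ScottContinuous (P x)) :
    ScottClosed (transversal P A) := by
  rw [transversal_eq_iInter]
  exact .iInter fun x => .iInter fun hx => scottClosed_setOfPred_not (hP x hx)

end Transversal

section PseudoInverse

variable {S₁ S₂ T₁ T₂ : Type*} {P₁ : S₁ → T₁ → Prop} {P₂ : S₂ → T₂ → Prop}

theorem setOfPred_mem_psInv_eq_transversal (R : Set (S₁ × S₂)) (s : T₂) :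
    {t | (s, t) ∈ psInv P₁ P₂ R} = transversal P₁ {x | ∃ y, (x, y) ∈ R ∧ P₂ y s}ᶜ :=
  Set.ext fun _ => forall_congr' fun _ => not_imp_not.symm

theorem isUpperSet_setOfPred_mem_psInv [Preorder T₂] (hP₂ : ∀ y, Monotone (P₂ y))
    (R : Set (S₁ × S₂)) (t : T₁) : IsUpperSet {s | (s, t) ∈ psInv P₁ P₂ R} := by
  intro s s' hle hs x hx
  obtain ⟨y, hxy, hys⟩ := hs x hx
  exact ⟨y, hxy, hP₂ y hle hys⟩

theorem stmt5_general [PartialOrder T₁] [OrderBot T₁] [PartialOrder T₂]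
    (hP₁ : ∀ x, ScottContinuous (P₁ x)) (hP₁_bot : ∀ x, ¬ P₁ x ⊥) (hP₂ : ∀ y, Monotone (P₂ y))
    (R : Set (S₁ × S₂)) : AmbRep (psInv P₁ P₂ R) := by
  refine ⟨fun s => ?_, isUpperSet_setOfPred_mem_psInv hP₂ R⟩
  rw [setOfPred_mem_psInv_eq_transversal]
  exact ⟨⟨⊥, fun x _ => hP₁_bot x⟩, scottClosed_transversal fun x _ => hP₁ x⟩

end PseudoInverse

/-- The pseudo-inverse `R⊤ ⊆ Ŝ₂ × Ŝ₁` of an ambiguous representation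
`R ⊆ S₁ × S₂` (w.r.t. separating compatibilities `P₁`, `P₂`) is an ambiguous
representation of `Ŝ₂` in `Ŝ₁`. -/
theorem stmt5 {S₁ S₂ T₁ T₂ : Type*}
    [SemilatticeInf S₁] [OrderBot S₁] [SemilatticeInf S₂] [OrderBot S₂]
    [SemilatticeInf T₁] [OrderBot T₁] [SemilatticeInf T₂] [OrderBot T₂]
    (h₁ : IsContinuousSemilattice S₁) (h₂ : IsContinuousSemilattice S₂)
    (ht₁ : IsContinuousSemilattice T₁) (ht₂ : IsContinuousSemilattice T₂)
    (P₁ : S₁ → T₁ → Prop) (P₂ : S₂ → T₂ → Prop)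
    (hP₁ : IsSeparatingCompatibility P₁) (hP₂ : IsSeparatingCompatibility P₂)
    (R : Set (S₁ × S₂)) (hR : AmbRep R) :
    AmbRep (psInv P₁ P₂ R) := by
  exact stmt5_general hP₁.1.scottContinuous_right hP₁.1.not_apply_bot
    (fun y => (hP₂.1.scottContinuous_right y).monotone) R
end

section
/- Let S₁, S₂, S₃, S₄ be continuous semilattices with zero and let R ⊆ S₁ × S₂, Q ⊆ S₂ × S₃, T ⊆ S₃ × S₄ be pseudo-invertible ambiguous representations (each satisfying: whenever (x,y) belongs to the relation and y' ≪ y, there exists x' ≪ x with (x',y') in the relation). Then the composition ';' is associative: R;(Q;T) = (R;Q);T. -/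
/-! Composition of ambiguous representations is the ordinary composition of relations followed by
an operator which replaces each cut by the set of elements whose way-below approximants all lie in
it. This operator is idempotent by interpolation of the way-below relation, so associativity
follows from that of relations once the inner application of the operator in `R ○ (Q ○ T)` and in
`(R ○ Q) ○ T` can be absorbed by the outer one. On the right factor this is immediate, on the left
factor it is exactly what the pseudo-invertibility of `T` provides. -/

section WayBelow

variable {α : Type*} [PartialOrder α] {x y z : α}

theorem WayBelow.mono_left (h : WayBelow y z) (hxy : x ≤ y) : WayBelow x z :=
  fun D hne hD a ha hza => (h D hne hD a ha hza).imp fun _ hd => ⟨hd.1, hxy.trans hd.2⟩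

end WayBelow

/-- A continuous poset: every element is the supremum of the nonempty directed set of its
way-below approximants. Existence of directed suprema is not required. -/
structure IsContinuousPoset_s12 (α : Type*) [PartialOrder α] : Prop where
  nonempty (y : α) : {x | WayBelow x y}.Nonempty
  directedOn (y : α) : DirectedOn (· ≤ ·) {x | WayBelow x y}
  isLUB (y : α) : IsLUB {x | WayBelow x y} y

theorem IsContinuousSemilattice.isContinuousPoset_s12 {α : Type*} [SemilatticeInf α] [OrderBot α]
    (h : IsContinuousSemilattice α) : IsContinuousPoset_s12 α where
  nonempty y := ⟨⊥, bot_wayBelow y⟩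
  directedOn y := (h.2 y).1
  isLUB y := (h.2 y).2

namespace IsContinuousPoset_s12

variable {α : Type*} [PartialOrder α]

theorem nonempty_setOf_wayBelow_wayBelow (h : IsContinuousPoset_s12 α) (y : α) :
    {x | ∃ e, WayBelow x e ∧ WayBelow e y}.Nonempty := by
  obtain ⟨e, hey⟩ := h.nonempty y
  obtain ⟨x, hxe⟩ := h.nonempty e
  exact ⟨x, e, hxe, hey⟩

theorem directedOn_setOf_wayBelow_wayBelow (h : IsContinuousPoset_s12 α) (y : α) :
    DirectedOn (· ≤ ·) {x | ∃ e, WayBelow x e ∧ WayBelow e y} := by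
  rintro x₁ ⟨e₁, hx₁, he₁⟩ x₂ ⟨e₂, hx₂, he₂⟩
  obtain ⟨e, he, he₁e, he₂e⟩ := h.directedOn y e₁ he₁ e₂ he₂
  obtain ⟨x, hx, hx₁x, hx₂x⟩ := h.directedOn e x₁ (hx₁.trans_le he₁e) x₂ (hx₂.trans_le he₂e)
  exact ⟨x, ⟨e, hx, he⟩, hx₁x, hx₂x⟩

theorem isLUB_setOf_wayBelow_wayBelow (h : IsContinuousPoset_s12 α) (y : α) :
    IsLUB {x | ∃ e, WayBelow x e ∧ WayBelow e y} y :=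
  ⟨fun _ ⟨_, hxe, hey⟩ => hxe.le.trans hey.le, fun _ hu =>
    (h.isLUB y).2 fun e hey => (h.isLUB e).2 fun _ hxe => hu ⟨e, hxe, hey⟩⟩

theorem exists_wayBelow_wayBelow (h : IsContinuousPoset_s12 α) {x y : α} (hxy : WayBelow x y) :
    ∃ e, WayBelow x e ∧ WayBelow e y := by
  obtain ⟨d, ⟨e, hde, hey⟩, hxd⟩ :=
    hxy _ (h.nonempty_setOf_wayBelow_wayBelow y) (h.directedOn_setOf_wayBelow_wayBelow y) y
      (h.isLUB_setOf_wayBelow_wayBelow y) le_rfl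
  exact ⟨e, hde.mono_left hxd, hey⟩

end IsContinuousPoset_s12

/-- A relation all of whose cuts `xR = {y | (x, y) ∈ R}` are lower sets. -/
def HasLowerCuts {α β : Type*} [LE β] (R : SetRel α β) : Prop :=
  ∀ x, IsLowerSet {y | (x, y) ∈ R}

/-- The cut closure of a relation `R`: it relates `x` to the `y` whose way-below approximants all
lie in the cut `xR`. If `R` has lower cuts in a continuous poset, this takes the Scott closure of
each cut. -/
def cutClosure {α β : Type*} [PartialOrder β] (R : SetRel α β) : SetRel α β :=
  {p | ∀ y', WayBelow y' p.2 → (p.1, y') ∈ R}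

section CutClosure

open scoped SetRel

variable {α β γ : Type*}

theorem AmbRep.hasLowerCuts [PartialOrder α] [PartialOrder β] {R : Set (α × β)} (hR : AmbRep R) :
    HasLowerCuts R :=
  fun x => (hR.1 x).2.1

theorem HasLowerCuts.comp [LE γ] {Q : SetRel β γ} (hQ : HasLowerCuts Q) (R : SetRel α β) :
    HasLowerCuts (R ○ Q) :=
  fun _ _ _ hle ⟨y, hxy, hyz⟩ => ⟨y, hxy, hQ y hle hyz⟩

theorem ambComp_eq_cutClosure_comp [PartialOrder γ] (R : SetRel α β) (Q : SetRel β γ) :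
    ambComp R Q = cutClosure (R ○ Q) :=
  rfl

theorem cutClosure_mono [PartialOrder β] {R R' : SetRel α β} (h : R ⊆ R') :
    cutClosure R ⊆ cutClosure R' :=
  fun _ hp y' hy' => h (hp y' hy')

theorem HasLowerCuts.subset_cutClosure [PartialOrder β] {R : SetRel α β} (hR : HasLowerCuts R) :
    R ⊆ cutClosure R :=
  fun p hp _ hy' => hR p.1 hy'.le hp

theorem cutClosure_cutClosure_subset [PartialOrder β] (hβ : IsContinuousPoset_s12 β)
    (R : SetRel α β) : cutClosure (cutClosure R) ⊆ cutClosure R := by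
  intro p hp y' hy'
  obtain ⟨e, hy'e, hep⟩ := hβ.exists_wayBelow_wayBelow hy'
  exact hp e hep y' hy'e

theorem cutClosure_subset_cutClosure [PartialOrder β] (hβ : IsContinuousPoset_s12 β)
    {R R' : SetRel α β} (h : R ⊆ cutClosure R') : cutClosure R ⊆ cutClosure R' :=
  (cutClosure_mono h).trans (cutClosure_cutClosure_subset hβ R')

theorem comp_cutClosure_subset [PartialOrder γ] (R : SetRel α β) (Q : SetRel β γ) :
    R ○ cutClosure Q ⊆ cutClosure (R ○ Q) :=
  fun _ ⟨y, hxy, hyz⟩ z' hz' => ⟨y, hxy, hyz z' hz'⟩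

theorem PseudoInvertible.cutClosure_comp_subset [PartialOrder β] [PartialOrder γ]
    {Q : SetRel β γ} (hQ : PseudoInvertible Q) (R : SetRel α β) :
    cutClosure R ○ Q ⊆ cutClosure (R ○ Q) := by
  rintro ⟨x, z⟩ ⟨y, hxy, hyz⟩ z' hz'
  obtain ⟨y', hy', hy'z'⟩ := hQ y z hyz z' hz'
  exact ⟨y', hxy y' hy', hy'z'⟩

theorem HasLowerCuts.cutClosure_comp_cutClosure [PartialOrder γ] (hγ : IsContinuousPoset_s12 γ)
    {Q : SetRel β γ} (hQ : HasLowerCuts Q) (R : SetRel α β) :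
    cutClosure (R ○ cutClosure Q) = cutClosure (R ○ Q) :=
  (cutClosure_subset_cutClosure hγ (comp_cutClosure_subset R Q)).antisymm
    (cutClosure_mono (SetRel.comp_subset_comp_right hQ.subset_cutClosure))

theorem PseudoInvertible.cutClosure_cutClosure_comp [PartialOrder β] [PartialOrder γ]
    (hγ : IsContinuousPoset_s12 γ) {Q : SetRel β γ} (hQ : PseudoInvertible Q) {R : SetRel α β}
    (hR : HasLowerCuts R) : cutClosure (cutClosure R ○ Q) = cutClosure (R ○ Q) :=
  (cutClosure_subset_cutClosure hγ (hQ.cutClosure_comp_subset R)).antisymm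
    (cutClosure_mono (SetRel.comp_subset_comp_left hR.subset_cutClosure))

theorem stmt12_general {S₁ S₂ S₃ S₄ : Type*} [PartialOrder S₃] [PartialOrder S₄]
    (h₄ : IsContinuousPoset_s12 S₄) (R : Set (S₁ × S₂)) (Q : Set (S₂ × S₃)) (T : Set (S₃ × S₄))
    (hQ : HasLowerCuts Q) (hT : HasLowerCuts T) (hTpi : PseudoInvertible T) :
    ambComp R (ambComp Q T) = ambComp (ambComp R Q) T := by
  simp only [ambComp_eq_cutClosure_comp]
  calc cutClosure (R ○ cutClosure (Q ○ T))
      = cutClosure (R ○ (Q ○ T)) := (hT.comp Q).cutClosure_comp_cutClosure h₄ R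
    _ = cutClosure ((R ○ Q) ○ T) := by rw [SetRel.comp_assoc]
    _ = cutClosure (cutClosure (R ○ Q) ○ T) :=
      (hTpi.cutClosure_cutClosure_comp h₄ (hQ.comp R)).symm

end CutClosure

/-- Composition of pseudo-invertible ambiguous representations is
associative: `R;(Q;T) = (R;Q);T`. -/
theorem stmt12 {S₁ S₂ S₃ S₄ : Type*}
    [SemilatticeInf S₁] [OrderBot S₁] [SemilatticeInf S₂] [OrderBot S₂]
    [SemilatticeInf S₃] [OrderBot S₃] [SemilatticeInf S₄] [OrderBot S₄]
    (h₁ : IsContinuousSemilattice S₁) (h₂ : IsContinuousSemilattice S₂)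
    (h₃ : IsContinuousSemilattice S₃) (h₄ : IsContinuousSemilattice S₄)
    (R : Set (S₁ × S₂)) (Q : Set (S₂ × S₃)) (T : Set (S₃ × S₄))
    (hR : AmbRep R) (hQ : AmbRep Q) (hT : AmbRep T)
    (hRpi : PseudoInvertible R) (hQpi : PseudoInvertible Q) (hTpi : PseudoInvertible T) :
    ambComp R (ambComp Q T) = ambComp (ambComp R Q) T :=
  stmt12_general h₄.isContinuousPoset_s12 R Q T hQ.hasLowerCuts hT.hasLowerCuts hTpi
end
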